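/- Fix 0 < ε < 1/6, and for each n let λ^n be a partition of n whose number of parts satisfies n(λ^n) ≤ n^ε. Then for every continuous function f : ℝ → ℝ of polynomial growth, E_n[f(τ̄(σ)) | λ(σ) = λ^n] − E_n[f(τ̄(σ))] → 0 as n → ∞, where τ̄ is the normalized Kendall's tau and the conditional expectation is the average of f(τ̄) over the uniform measure on S_n^{λ^n}. -/

import Mathlib

open scoped BigOperators Classical
open Finset Filter

/-- Expectation under the uniform measure on `S_n`. -/
noncomputable def En {n : ℕ} (g : Equiv.Perm (Fin n) → ℝ) : ℝ :=
  (∑ σ : Equiv.Perm (Fin n), g σ) / (Fintype.card (Equiv.Perm (Fin n)) : ℝ)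

/-- Variance under the uniform measure on `S_n`. -/
noncomputable def VarN {n : ℕ} (g : Equiv.Perm (Fin n) → ℝ) : ℝ :=
  En (fun σ => (g σ - En g) ^ 2)

/-- Kendall's tau: the number of inversions `#{(i,j) : i < j, σ(i) > σ(j)}`. -/
noncomputable def kendallTau {n : ℕ} (σ : Equiv.Perm (Fin n)) : ℕ :=
  (Finset.univ.filter (fun p : Fin n × Fin n => p.1 < p.2 ∧ σ p.2 < σ p.1)).card

/-- Normalized Kendall's tau `τ̄ = (τ − E τ)/√(Var τ)`. -/
noncomputable def kendallTauBar {n : ℕ} (σ : Equiv.Perm (Fin n)) : ℝ :=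
  ((kendallTau σ : ℝ) - En (fun σ : Equiv.Perm (Fin n) => (kendallTau σ : ℝ))) /
    Real.sqrt (VarN (fun σ : Equiv.Perm (Fin n) => (kendallTau σ : ℝ)))

/-- Conditional expectation given cycle type `λ`: the average over `S_n^λ`. -/
noncomputable def EnCond {n : ℕ} (lam : (Fintype.card (Fin n)).Partition)
    (g : Equiv.Perm (Fin n) → ℝ) : ℝ :=
  (∑ σ ∈ Finset.univ.filter (fun σ : Equiv.Perm (Fin n) => σ.partition = lam), g σ) /
    ((Finset.univ.filter (fun σ : Equiv.Perm (Fin n) => σ.partition = lam)).card : ℝ)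


/-- number of cycles, fixed points included -/
noncomputable def cyc {n : ℕ} (σ : Equiv.Perm (Fin n)) : ℕ :=
  Fintype.card (Quotient (Equiv.Perm.SameCycle.setoid σ))

lemma sameCycle_rel {n m : ℕ} {e : Equiv.Perm (Fin n)} {σ : Equiv.Perm (Fin m)} (φ : Fin n → Fin m)
    (h : ∀ i, σ.SameCycle (φ i) (φ (e i))) {i j : Fin n} (hij : e.SameCycle i j) :
    σ.SameCycle (φ i) (φ j) := by
  obtain ⟨k, -, rfl⟩ := hij.exists_pow_eq'
  clear hij
  induction k with
  | zero => simp [Equiv.Perm.SameCycle.refl]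
  | succ k ih =>
    rw [pow_succ', Equiv.Perm.mul_apply]
    exact ih.trans (h _)

lemma sameCycle_merge {n : ℕ} (σ : Equiv.Perm (Fin n)) {x y : Fin n} (hxy : ¬ σ.SameCycle x y) :
    (σ * Equiv.swap x y).SameCycle x y := by
  have hex : ∃ N, 0 < N ∧ (σ ^ N) y = y :=
    ⟨orderOf σ, orderOf_pos σ, by simp [pow_orderOf_eq_one]⟩
  classical
  have hN := Nat.find_spec hex
  have hmin : ∀ k, 0 < k → k < Nat.find hex → (σ ^ k) y ≠ y := fun k h0 hk h =>
    Nat.find_min hex hk ⟨h0, h⟩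
  set N := Nat.find hex
  have key : ∀ k, k + 1 ≤ N → ((σ * Equiv.swap x y) ^ (k + 1)) x = (σ ^ (k + 1)) y := by
    intro k
    induction k with
    | zero => intro _; simp
    | succ k ih =>
      intro hk
      have h1 := ih (by omega)
      have h2 := hmin (k + 1) (by omega) (by omega)
      have h3 : (σ ^ (k + 1)) y ≠ x := by
        intro h
        apply hxy
        rw [Equiv.Perm.sameCycle_comm]
        exact ⟨((k + 1 : ℕ) : ℤ), by rw [zpow_natCast]; exact h⟩
      rw [pow_succ', Equiv.Perm.mul_apply, h1, Equiv.Perm.mul_apply,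
        Equiv.swap_apply_of_ne_of_ne h3 h2, ← Equiv.Perm.mul_apply, ← pow_succ']
  obtain ⟨h0, h1⟩ := hN
  refine ⟨(N : ℤ), ?_⟩
  have := key (N - 1) (by omega)
  rw [Nat.sub_add_cancel h0] at this
  rw [zpow_natCast, this, h1]

lemma cyc_merge {n : ℕ} (σ : Equiv.Perm (Fin n)) {x y : Fin n} (hxy : ¬ σ.SameCycle x y) :
    cyc (σ * Equiv.swap x y) < cyc σ := by
  have hm := sameCycle_merge σ hxy
  have hstep : ∀ a, (σ * Equiv.swap x y).SameCycle (id a) (id (σ a)) := by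
    intro a
    simp only [id]
    by_cases hx : a = x
    · subst hx
      refine hm.trans ?_
      exact ⟨1, by simp⟩
    · by_cases hy : a = y
      · subst hy
        refine hm.symm.trans ?_
        exact ⟨1, by simp⟩
      · exact ⟨1, by simp [Equiv.swap_apply_of_ne_of_ne hx hy]⟩
  let F : Quotient (Equiv.Perm.SameCycle.setoid σ) →
      Quotient (Equiv.Perm.SameCycle.setoid (σ * Equiv.swap x y)) :=
    Quotient.map' id (fun a b hab => sameCycle_rel id hstep hab)
  have hs : Function.Surjective F := by
    intro q
    induction q using Quotient.inductionOn' with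
    | h a => exact ⟨Quotient.mk'' a, rfl⟩
  refine Fintype.card_lt_of_surjective_not_injective F hs ?_
  intro hi
  have : F (Quotient.mk'' x) = F (Quotient.mk'' y) := Quotient.sound' hm
  exact hxy (Quotient.exact (hi this))

lemma exists_full {n : ℕ} (k : ℕ) : ∀ σ : Equiv.Perm (Fin n), cyc σ ≤ k →
    ∃ ρ : Equiv.Perm (Fin n), (∀ x y, ρ.SameCycle x y) ∧ hammingDist (σ : Fin n → Fin n) ρ ≤ 2 * k := by
  induction k with
  | zero =>
    intro σ h
    refine ⟨σ, fun x y => ?_, by simp⟩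
    exfalso
    have : 0 < cyc σ := Fintype.card_pos_iff.2 ⟨Quotient.mk'' x⟩
    omega
  | succ k ih =>
    intro σ h
    by_cases hall : ∀ x y, σ.SameCycle x y
    · exact ⟨σ, hall, by simp⟩
    · push Not at hall
      obtain ⟨x, y, hxy⟩ := hall
      obtain ⟨ρ, h1, h2⟩ := ih (σ * Equiv.swap x y) (by have := cyc_merge σ hxy; omega)
      refine ⟨ρ, h1, ?_⟩
      have h3 : hammingDist (σ : Fin n → Fin n) (σ * Equiv.swap x y : Equiv.Perm (Fin n)) ≤ 2 := by
        unfold hammingDist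
        refine (Finset.card_le_card (t := {x, y}) ?_).trans Finset.card_le_two
        intro a ha
        simp only [Finset.mem_filter, Finset.mem_univ, true_and] at ha
        by_contra hn
        simp only [Finset.mem_insert, Finset.mem_singleton, not_or] at hn
        exact ha (by simp [Equiv.swap_apply_of_ne_of_ne hn.1 hn.2])
      have := hammingDist_triangle (σ : Fin n → Fin n) (σ * Equiv.swap x y : Equiv.Perm (Fin n)) ρ
      omega

lemma full_isCycle {n : ℕ} (hn : 2 ≤ n) (ρ : Equiv.Perm (Fin n)) (h : ∀ x y, ρ.SameCycle x y) :
    ρ.IsCycle ∧ ρ.support = Finset.univ := by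
  have hne : ∀ x, ρ x ≠ x := by
    intro x hx
    have : Nontrivial (Fin n) := Fin.nontrivial_iff_two_le.2 hn
    obtain ⟨y, hy⟩ := exists_ne x
    obtain ⟨k, hk⟩ := h x y
    rw [Equiv.Perm.zpow_apply_eq_self_of_apply_eq_self hx] at hk
    exact hy hk.symm
  refine ⟨⟨⟨0, by omega⟩, hne _, fun y _ => h _ y⟩, ?_⟩
  ext x; simp [hne]

lemma hamming_conj {n : ℕ} (σ ρ w : Equiv.Perm (Fin n)) :
    hammingDist ((w * σ * w⁻¹ : Equiv.Perm (Fin n)) : Fin n → Fin n) (w * ρ * w⁻¹ : Equiv.Perm (Fin n))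
      = hammingDist (σ : Fin n → Fin n) ρ := by
  unfold hammingDist
  symm
  refine Finset.card_bij (fun a _ => w a) ?_ ?_ ?_
  · intro a ha; simpa using ha
  · intro a _ b _ h; exact w.injective h
  · intro b hb
    exact ⟨w⁻¹ b, by simpa using hb, by simp⟩

lemma exists_conj_close {n : ℕ} (hn : 2 ≤ n) (σ s : Equiv.Perm (Fin n)) :
    ∃ u : Equiv.Perm (Fin n), hammingDist (σ : Fin n → Fin n) (u * s * u⁻¹ : Equiv.Perm (Fin n))
      ≤ 2 * (cyc σ + cyc s) := by
  obtain ⟨ρ, h1, h2⟩ := exists_full (cyc σ) σ le_rfl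
  obtain ⟨ρ', h1', h2'⟩ := exists_full (cyc s) s le_rfl
  obtain ⟨c1, s1⟩ := full_isCycle hn ρ h1
  obtain ⟨c2, s2⟩ := full_isCycle hn ρ' h1'
  obtain ⟨u, hu⟩ := isConj_iff.1 (c2.isConj c1 (by rw [s1, s2]))
  refine ⟨u, ?_⟩
  have h3 := hamming_conj s ρ' u
  rw [hu] at h3
  have h4 := hammingDist_triangle (σ : Fin n → Fin n) ρ (u * s * u⁻¹ : Equiv.Perm (Fin n))
  rw [hammingDist_comm] at h3
  omega

lemma tau_diff {n : ℕ} (σ ρ : Equiv.Perm (Fin n)) :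
    (kendallTau σ : ℝ) ≤ kendallTau ρ + 2 * n * hammingDist (σ : Fin n → Fin n) ρ := by
  have : kendallTau σ ≤ kendallTau ρ + 2 * n * hammingDist (σ : Fin n → Fin n) ρ := by
    unfold kendallTau hammingDist
    set H := Finset.univ.filter (fun i => σ i ≠ ρ i) with hH
    have hsub : Finset.univ.filter (fun p : Fin n × Fin n => p.1 < p.2 ∧ σ p.2 < σ p.1) ⊆
        Finset.univ.filter (fun p : Fin n × Fin n => p.1 < p.2 ∧ ρ p.2 < ρ p.1) ∪
          (H ×ˢ Finset.univ ∪ Finset.univ ×ˢ H) := by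
      rintro ⟨i, j⟩ hp
      simp only [hH, Finset.mem_filter, Finset.mem_univ, true_and, Finset.mem_union,
        Finset.mem_product, and_true] at hp ⊢
      by_cases h1 : σ i = ρ i
      · by_cases h2 : σ j = ρ j
        · left; rw [← h1, ← h2]; exact hp
        · right; right; exact h2
      · right; left; exact h1
    refine (Finset.card_le_card hsub).trans ((Finset.card_union_le _ _).trans ?_)
    refine Nat.add_le_add_left ((Finset.card_union_le _ _).trans ?_) _
    simp only [Finset.card_product, Finset.card_univ, Fintype.card_fin]
    apply le_of_eq; ring
  exact_mod_cast this

lemma tau_diff_abs {n : ℕ} (σ ρ : Equiv.Perm (Fin n)) :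
    |(kendallTau σ : ℝ) - kendallTau ρ| ≤ 2 * n * hammingDist (σ : Fin n → Fin n) ρ := by
  have h1 := tau_diff σ ρ
  have h2 := tau_diff ρ σ
  rw [hammingDist_comm] at h2
  rw [abs_le]; constructor <;> linarith

lemma cyc_le_parts {n : ℕ} (σ : Equiv.Perm (Fin n)) : cyc σ ≤ σ.partition.parts.card := by
  have h1 : σ.partition.parts.card = σ.cycleFactorsFinset.card + (Finset.univ \ σ.support).card := by
    rw [Equiv.Perm.parts_partition, Multiset.card_add, Multiset.card_replicate,
      Equiv.Perm.cycleType_def, Multiset.card_map, Finset.card_sdiff_of_subset (Finset.subset_univ _)]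
    simp
  let φ : Quotient (Equiv.Perm.SameCycle.setoid σ) → Equiv.Perm (Fin n) ⊕ Fin n := fun q =>
    if q.out ∈ σ.support then Sum.inl (σ.cycleOf q.out) else Sum.inr q.out
  have hφ : Function.Injective φ := by
    intro q r h
    simp only [φ] at h
    rw [← Quotient.out_eq q, ← Quotient.out_eq r]
    apply Quotient.sound
    change σ.SameCycle _ _
    split_ifs at h with ha hb hb
    · exact (Equiv.Perm.sameCycle_iff_cycleOf_eq_of_mem_support ha hb).2 (Sum.inl_injective h)
    · rw [Sum.inr_injective h]
  have h2 : (Finset.univ.image φ) ⊆ (σ.cycleFactorsFinset).disjSum (Finset.univ \ σ.support) := by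
    intro z hz
    obtain ⟨q, -, rfl⟩ := Finset.mem_image.1 hz
    simp only [φ]
    split_ifs with ha
    · exact Finset.inl_mem_disjSum.2 (Equiv.Perm.cycleOf_mem_cycleFactorsFinset_iff.2 ha)
    · exact Finset.inr_mem_disjSum.2 (by simpa using ha)
  have h3 := Finset.card_le_card h2
  rw [Finset.card_image_of_injective _ hφ, Finset.card_disjSum] at h3
  rw [h1]; exact h3

lemma cyc_decompose {n : ℕ} (p : Fin (n + 1)) (e : Equiv.Perm (Fin n)) :
    cyc (Equiv.Perm.decomposeFin.symm (p, e)) ≤ cyc e + if p = 0 then 1 else 0 := by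
  set σ := Equiv.Perm.decomposeFin.symm (p, e) with hσ
  have h0 : σ 0 = p := by simp [hσ]
  have hs : ∀ i : Fin n, σ i.succ = Equiv.swap 0 p (e i).succ := by intro i; simp [hσ]
  have hstep : ∀ i : Fin n, σ.SameCycle (Fin.succ i) (Fin.succ (e i)) := by
    intro i
    by_cases h : (e i).succ = p
    · refine ⟨2, ?_⟩
      have : (σ ^ (2:ℤ)) i.succ = σ (σ i.succ) := by
        rw [zpow_two]; rfl
      rw [this, hs, h, Equiv.swap_apply_right, h0]
    · refine ⟨1, ?_⟩
      rw [zpow_one, hs, Equiv.swap_apply_of_ne_of_ne (Fin.succ_ne_zero _) h]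
  let F : Quotient (Equiv.Perm.SameCycle.setoid e) → Quotient (Equiv.Perm.SameCycle.setoid σ) :=
    Quotient.map' Fin.succ (fun a b hab => sameCycle_rel Fin.succ hstep hab)
  split_ifs with hp
  · let G : Option (Quotient (Equiv.Perm.SameCycle.setoid e)) →
      Quotient (Equiv.Perm.SameCycle.setoid σ) := fun o => o.elim (Quotient.mk'' 0) F
    have hG : Function.Surjective G := by
      intro q
      induction q using Quotient.inductionOn' with
      | h a =>
        refine Fin.cases ⟨none, rfl⟩ (fun i => ⟨some (Quotient.mk'' i), rfl⟩) a
    have := Fintype.card_le_of_surjective G hG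
    rwa [Fintype.card_option] at this
  · have hF : Function.Surjective F := by
      intro q
      induction q using Quotient.inductionOn' with
      | h a =>
        refine Fin.cases ?_ (fun i => ⟨Quotient.mk'' i, rfl⟩) a
        obtain ⟨j, rfl⟩ := Fin.exists_succ_eq.2 hp
        refine ⟨Quotient.mk'' j, Quotient.sound' ?_⟩
        change σ.SameCycle _ _
        exact Equiv.Perm.SameCycle.symm ⟨1, by simpa using h0⟩
    exact Fintype.card_le_of_surjective F hF

lemma sum_two_pow_cyc (n : ℕ) : ∑ σ : Equiv.Perm (Fin n), 2 ^ cyc σ ≤ (n + 1).factorial := by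
  induction n with
  | zero => 
    have : ∀ σ : Equiv.Perm (Fin 0), cyc σ = 0 := by
      intro σ
      refine Fintype.card_eq_zero_iff.2 ⟨fun q => ?_⟩
      exact q.out.elim0
    simp [this]
  | succ n ih =>
    rw [← Equiv.sum_comp Equiv.Perm.decomposeFin.symm, Fintype.sum_prod_type_right]
    have : ∀ e : Equiv.Perm (Fin n),
        ∑ p : Fin (n + 1), 2 ^ cyc (Equiv.Perm.decomposeFin.symm (p, e)) ≤ (n + 2) * 2 ^ cyc e := by
      intro e
      rw [Fin.sum_univ_succ]
      have h1 := cyc_decompose 0 e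
      have h2 : ∀ i : Fin n, 2 ^ cyc (Equiv.Perm.decomposeFin.symm (i.succ, e)) ≤ 2 ^ cyc e := by
        intro i
        have := cyc_decompose i.succ e
        rw [if_neg (Fin.succ_ne_zero i)] at this
        exact Nat.pow_le_pow_right (by norm_num) this
      have h3 := Finset.sum_le_sum (fun i (_ : i ∈ (Finset.univ : Finset (Fin n))) => h2 i)
      simp only [Finset.sum_const, Finset.card_univ, Fintype.card_fin, smul_eq_mul] at h3
      have h4 : 2 ^ cyc (Equiv.Perm.decomposeFin.symm (0, e)) ≤ 2 ^ (cyc e + 1) :=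
        Nat.pow_le_pow_right (by norm_num) (by simpa using h1)
      rw [pow_succ] at h4
      nlinarith
    refine (Finset.sum_le_sum (fun e _ => this e)).trans ?_
    rw [← Finset.mul_sum, Nat.factorial_succ (n + 1)]
    exact Nat.mul_le_mul_left _ ih

noncomputable def insPerm {n : ℕ} (q : Fin (n + 1) × Equiv.Perm (Fin n)) : Equiv.Perm (Fin (n + 1)) :=
  ((finSuccEquiv' 0).trans (Equiv.optionCongr q.2)).trans (finSuccEquiv' q.1).symm

lemma insPerm_zero {n : ℕ} (q : Fin (n + 1) × Equiv.Perm (Fin n)) : insPerm q 0 = q.1 := by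
  simp [insPerm]

lemma insPerm_succ {n : ℕ} (q : Fin (n + 1) × Equiv.Perm (Fin n)) (i : Fin n) :
    insPerm q i.succ = q.1.succAbove (q.2 i) := by
  have : finSuccEquiv' (0 : Fin (n+1)) i.succ = some i := by
    rw [← Fin.succAbove_zero]; exact finSuccEquiv'_succAbove 0 i
  simp [insPerm, this]

lemma insPerm_bij (n : ℕ) : Function.Bijective (insPerm (n := n)) := by
  rw [Fintype.bijective_iff_injective_and_card]
  constructor
  · rintro ⟨p, e⟩ ⟨p', e'⟩ h
    have h0 : p = p' := by
      have := insPerm_zero (p, e)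
      rw [h, insPerm_zero] at this
      exact this.symm
    subst h0
    have : e = e' := by
      ext i
      have := insPerm_succ (p, e) i
      rw [h, insPerm_succ] at this
      exact congrArg _ (Fin.succAbove_right_injective this).symm
    rw [this]
  · simp [Fintype.card_perm, Nat.factorial_succ]

lemma tau_insPerm {n : ℕ} (q : Fin (n + 1) × Equiv.Perm (Fin n)) :
    kendallTau (insPerm q) = q.1 + kendallTau q.2 := by
  unfold kendallTau
  simp only [Finset.card_filter, Fintype.sum_prod_type, Fin.sum_univ_succ, insPerm_zero,
    insPerm_succ, Fin.succAbove_lt_succAbove_iff, Fin.succ_lt_succ_iff, Fin.succ_pos, true_and,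
    false_and, if_false, zero_add, Fin.not_lt_zero]
  congr 1
  rw [Equiv.sum_comp q.2 (fun j => if q.1.succAbove j < q.1 then 1 else 0)]
  simp only [Fin.succAbove_lt_iff_castSucc_lt]
  rw [← Finset.card_filter]
  have := Fin.card_filter_val_lt (n := n) (m := q.1.val)
  simpa [Fin.lt_def, Nat.le_of_lt_succ q.1.2] using this

lemma sum_tau_succ {n : ℕ} (F : ℝ → ℝ) :
    ∑ σ : Equiv.Perm (Fin (n + 1)), F (kendallTau σ) =
      ∑ p ∈ Finset.range (n + 1), ∑ e : Equiv.Perm (Fin n), F ((p : ℝ) + kendallTau e) := by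
  rw [← (insPerm_bij n).sum_comp, Fintype.sum_prod_type, ← Fin.sum_univ_eq_sum_range
    (fun p => ∑ e : Equiv.Perm (Fin n), F ((p : ℝ) + kendallTau e))]
  simp [tau_insPerm]

lemma card_perm_real (n : ℕ) : (Fintype.card (Equiv.Perm (Fin n)) : ℝ) = n.factorial := by
  simp [Fintype.card_perm]

lemma sum_range_shift (n : ℕ) : ∑ p ∈ Finset.range (n + 1), ((p : ℝ) - n / 2) = 0 := by
  rw [Finset.sum_sub_distrib]
  have : ∀ m : ℕ, ∑ p ∈ Finset.range (m + 1), (p : ℝ) = m * (m + 1) / 2 := by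
    intro m
    induction m with
    | zero => simp
    | succ m ih => rw [Finset.sum_range_succ, ih]; push_cast; ring
  rw [this]; simp; ring

lemma sum_range_shift_sq (n : ℕ) :
    ∑ p ∈ Finset.range (n + 1), ((p : ℝ) - n / 2) ^ 2 = ((n : ℝ) + 1) * (n * (n + 2) / 12) := by
  have h1 : ∀ m : ℕ, ∀ c : ℝ, ∑ p ∈ Finset.range (m + 1), ((p : ℝ) - c) ^ 2
      = m * (m + 1) * (2 * m + 1) / 6 - c * (m * (m + 1)) + (m + 1) * c ^ 2 := by
    intro m c
    induction m with
    | zero => simp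
    | succ m ih => rw [Finset.sum_range_succ, ih]; push_cast; ring
  rw [h1]; ring

/-- centered tau -/
noncomputable def ctau {n : ℕ} (σ : Equiv.Perm (Fin n)) : ℝ := kendallTau σ - n * (n - 1) / 4

lemma sum_ctau_succ {n : ℕ} (F : ℝ → ℝ) :
    ∑ σ : Equiv.Perm (Fin (n + 1)), F (ctau σ) =
      ∑ p ∈ Finset.range (n + 1), ∑ e : Equiv.Perm (Fin n), F (((p : ℝ) - n / 2) + ctau e) := by
  have := sum_tau_succ (n := n) (fun x => F (x - (n + 1 : ℕ) * ((n + 1 : ℕ) - 1) / 4))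
  simp only [ctau]
  rw [this]
  refine Finset.sum_congr rfl fun p _ => Finset.sum_congr rfl fun e _ => ?_
  congr 1; push_cast; ring

lemma sum_ctau (n : ℕ) : ∑ σ : Equiv.Perm (Fin n), ctau σ = 0 := by
  induction n with
  | zero => simp [ctau, kendallTau]
  | succ n ih =>
    rw [sum_ctau_succ (fun x => x)]
    simp only [Finset.sum_add_distrib, ih]
    simp only [Finset.sum_const, ← Finset.smul_sum, sum_range_shift]
    simp

lemma sum_ctau_sq (n : ℕ) :
    ∑ σ : Equiv.Perm (Fin n), ctau σ ^ 2 = n.factorial * (n * (n - 1) * (2 * n + 5) / 72) := by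
  induction n with
  | zero => simp [ctau, kendallTau]
  | succ n ih =>
    rw [sum_ctau_succ (fun x => x ^ 2)]
    have : ∀ p : ℕ, ∑ e : Equiv.Perm (Fin n), (((p : ℝ) - n / 2) + ctau e) ^ 2 =
        n.factorial * ((p : ℝ) - n / 2) ^ 2 +
          n.factorial * (n * (n - 1) * (2 * n + 5) / 72) := by
      intro p
      simp only [add_sq, Finset.sum_add_distrib, ih, ← Finset.mul_sum, sum_ctau]
      simp [Fintype.card_perm]
    simp only [this, Finset.sum_add_distrib, ← Finset.mul_sum, sum_range_shift_sq]
    simp only [Finset.sum_const, Finset.card_range, Nat.factorial_succ, nsmul_eq_mul]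
    push_cast; ring

lemma sum_exp_range (n : ℕ) (s : ℝ) :
    ∑ p ∈ Finset.range (n + 1), Real.exp (s * ((p : ℝ) - n / 2)) ≤
      (n + 1) * Real.exp (s ^ 2 * n ^ 2 / 8) := by
  have h1 : ∑ p ∈ Finset.range (n + 1), Real.exp (s * ((p : ℝ) - n / 2)) =
      ∑ p ∈ Finset.range (n + 1), Real.exp (-(s * ((p : ℝ) - n / 2))) := by
    rw [← Finset.sum_range_reflect]
    refine Finset.sum_congr rfl fun p hp => ?_
    have : p ≤ n := by simpa [Nat.lt_succ_iff] using hp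
    rw [show n + 1 - 1 - p = n - p by omega, Nat.cast_sub this]
    congr 1; ring
  have h2 : ∑ p ∈ Finset.range (n + 1), Real.exp (s * ((p : ℝ) - n / 2)) =
      ∑ p ∈ Finset.range (n + 1), Real.cosh (s * ((p : ℝ) - n / 2)) := by
    simp only [Real.cosh_eq, ← Finset.sum_div, Finset.sum_add_distrib]
    rw [← h1]; ring
  rw [h2]
  have h3 : ∀ p ∈ Finset.range (n + 1), Real.cosh (s * ((p : ℝ) - n / 2)) ≤
      Real.exp (s ^ 2 * n ^ 2 / 8) := by
    intro p hp
    have hp' : (p : ℝ) ≤ n := by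
      have : p ≤ n := by simpa [Nat.lt_succ_iff] using hp
      exact_mod_cast this
    have hp0 : (0 : ℝ) ≤ p := Nat.cast_nonneg p
    refine (Real.cosh_le_exp_half_sq _).trans (Real.exp_le_exp.2 ?_)
    have : ((p : ℝ) - n / 2) ^ 2 ≤ n ^ 2 / 4 := by nlinarith
    have := mul_le_mul_of_nonneg_left this (sq_nonneg s)
    nlinarith
  refine (Finset.sum_le_sum h3).trans ?_
  simp

lemma sum_exp_ctau (n : ℕ) (s : ℝ) :
    ∑ σ : Equiv.Perm (Fin n), Real.exp (s * ctau σ) ≤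
      n.factorial * Real.exp (s ^ 2 * n ^ 3 / 24) := by
  induction n with
  | zero => simp [ctau, kendallTau]
  | succ n ih =>
    rw [sum_ctau_succ (fun x => Real.exp (s * x))]
    simp only [mul_add, Real.exp_add, ← Finset.mul_sum, ← Finset.sum_mul]
    refine (mul_le_mul (sum_exp_range n s) ih (by positivity) (by positivity)).trans ?_
    rw [show ((n : ℝ) + 1) * Real.exp (s ^ 2 * n ^ 2 / 8) *
      (n.factorial * Real.exp (s ^ 2 * n ^ 3 / 24)) = ((n + 1).factorial : ℕ) *
      Real.exp (s ^ 2 * n ^ 2 / 8 + s ^ 2 * n ^ 3 / 24) by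
        rw [Real.exp_add, Nat.factorial_succ]; push_cast; ring]
    gcongr
    push_cast
    have : 0 ≤ s ^ 2 * (3 * n + 1) := by positivity
    nlinarith

lemma En_tau (n : ℕ) : En (fun σ : Equiv.Perm (Fin n) => (kendallTau σ : ℝ)) = n * (n - 1) / 4 := by
  have h := sum_ctau n
  simp only [ctau, Finset.sum_sub_distrib, Finset.sum_const, Finset.card_univ, nsmul_eq_mul] at h
  unfold En
  have h0 : (Fintype.card (Equiv.Perm (Fin n)) : ℝ) ≠ 0 := by
    rw [card_perm_real]; positivity
  rw [div_eq_iff h0]; linarith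

lemma VarN_tau (n : ℕ) : VarN (fun σ : Equiv.Perm (Fin n) => (kendallTau σ : ℝ)) =
    n * (n - 1) * (2 * n + 5) / 72 := by
  unfold VarN
  rw [En_tau]
  have h := sum_ctau_sq n
  unfold ctau at h
  unfold En
  rw [h, card_perm_real]
  have : (n.factorial : ℝ) ≠ 0 := by positivity
  field_simp

noncomputable def sdn (n : ℕ) : ℝ := Real.sqrt (n * (n - 1) * (2 * n + 5) / 72)

lemma tauBar_eq {n : ℕ} (σ : Equiv.Perm (Fin n)) : kendallTauBar σ = ctau σ / sdn n := by
  unfold kendallTauBar ctau sdn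
  rw [En_tau, VarN_tau]

lemma sdn_sq {n : ℕ} (hn : 2 ≤ n) : (n : ℝ) ^ 3 / 72 ≤ sdn n ^ 2 := by
  have h : (2 : ℝ) ≤ n := by exact_mod_cast hn
  have h1 : (n : ℝ) ^ 3 / 72 ≤ n * (n - 1) * (2 * n + 5) / 72 := by
    have : 0 ≤ (n : ℝ) * (n ^ 2 + 3 * n - 5) := by
      apply mul_nonneg <;> nlinarith
    nlinarith
  unfold sdn
  rw [Real.sq_sqrt ((by positivity : (0:ℝ) ≤ (n : ℝ) ^ 3 / 72).trans h1)]
  exact h1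

lemma sdn_pos {n : ℕ} (hn : 2 ≤ n) : 0 < sdn n := by
  have h := sdn_sq hn
  have h2 : (0 : ℝ) < n := by exact_mod_cast (by omega : 0 < n)
  have h3 : 0 < sdn n ^ 2 := lt_of_lt_of_le (by positivity) h
  exact lt_of_le_of_ne (Real.sqrt_nonneg _) (fun h => by rw [← h] at h3; norm_num at h3)

lemma En_moment {n : ℕ} (hn : 2 ≤ n) (M : ℕ) :
    En (fun σ : Equiv.Perm (Fin n) => kendallTauBar σ ^ (2 * M)) ≤
      (2 * M).factorial * (2 * Real.exp 3) := by
  have hpos := sdn_pos hn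
  have hsq := sdn_sq hn
  have h2 : (0 : ℝ) < n := by exact_mod_cast (by omega : 0 < n)
  have hpt : ∀ x : ℝ, x ^ (2 * M) ≤ (2 * M).factorial * (Real.exp x + Real.exp (-x)) := by
    intro x
    have h1 := Real.pow_div_factorial_le_exp |x| (abs_nonneg x) (2 * M)
    have h3 : Real.exp |x| ≤ Real.exp x + Real.exp (-x) := by
      rcases abs_cases x with ⟨h, _⟩ | ⟨h, _⟩ <;> rw [h] <;>
        linarith [Real.exp_pos x, Real.exp_pos (-x)]
    rw [div_le_iff₀ (by positivity)] at h1
    rw [Even.pow_abs ⟨M, by ring⟩] at h1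
    refine h1.trans ?_
    rw [mul_comm]
    gcongr
  have hexp : ∀ s : ℝ, s ^ 2 = 1 / sdn n ^ 2 →
      ∑ σ : Equiv.Perm (Fin n), Real.exp (s * ctau σ) ≤ n.factorial * Real.exp 3 := by
    intro s hs
    refine (sum_exp_ctau n s).trans ?_
    gcongr
    rw [hs, one_div, inv_mul_eq_div, div_div, div_le_iff₀ (by positivity)]
    linarith
  unfold En
  rw [card_perm_real, div_le_iff₀ (by positivity)]
  have e1 := hexp (1 / sdn n) (by ring)
  have e2 := hexp (-(1 / sdn n)) (by ring)
  calc _ ≤ ∑ σ : Equiv.Perm (Fin n), (2 * M).factorial *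
        (Real.exp (1 / sdn n * ctau σ) + Real.exp (-(1 / sdn n) * ctau σ)) := by
        refine Finset.sum_le_sum fun σ _ => ?_
        rw [tauBar_eq]
        rw [show 1 / sdn n * ctau σ = ctau σ / sdn n by ring,
          show -(1 / sdn n) * ctau σ = -(ctau σ / sdn n) by ring]
        exact hpt _
    _ = (2 * M).factorial * (∑ σ : Equiv.Perm (Fin n), Real.exp (1 / sdn n * ctau σ) +
        ∑ σ : Equiv.Perm (Fin n), Real.exp (-(1 / sdn n) * ctau σ)) := by
        rw [← Finset.mul_sum, Finset.sum_add_distrib]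
    _ ≤ (2 * M).factorial * (n.factorial * Real.exp 3 + n.factorial * Real.exp 3) := by
        gcongr
    _ = _ := by ring

lemma ptwise (f : ℝ → ℝ) (hf : Continuous f) (C : ℝ) (m M : ℕ) (hM : m + 1 ≤ 2 * M)
    (hC : ∀ x : ℝ, |f x| ≤ C * (1 + |x| ^ m)) (η : ℝ) (hη : 0 < η) :
    ∃ K : ℝ, 0 ≤ K ∧ ∀ a b : ℝ, |f a - f b| ≤ η * (1 + a ^ (2 * M)) + K * (a - b) ^ (2 * M) := by
  have hC0 : 0 ≤ C := by
    have h := (abs_nonneg _).trans (hC 0)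
    have : 0 < (1 + |(0 : ℝ)| ^ m) := by positivity
    exact nonneg_of_mul_nonneg_left h this
  set C' := C * (2 + 2 ^ m) with hC'
  have hC'0 : 0 ≤ C' := by positivity
  have hgrow : ∀ a b : ℝ, |f a - f b| ≤ C' * (1 + |a| ^ m + |a - b| ^ m) := by
    intro a b
    have hb : |b| ^ m ≤ 2 ^ m * (|a| ^ m + |a - b| ^ m) := by
      have h1 : |b| ≤ |a| + |a - b| := by
        have := abs_sub a (a - b); simpa using this
      have h2 : |b| ≤ 2 * max |a| |a - b| := by
        linarith [le_max_left |a| |a - b|, le_max_right |a| |a - b|]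
      refine (pow_le_pow_left₀ (abs_nonneg b) h2 m).trans ?_
      rw [mul_pow]
      gcongr
      rcases max_cases |a| |a - b| with ⟨h, _⟩ | ⟨h, _⟩ <;> rw [h]
      · linarith [pow_nonneg (abs_nonneg (a - b)) m]
      · linarith [pow_nonneg (abs_nonneg a) m]
    have h1 := abs_sub (f a) (f b)
    have h2 := hC a
    have h3 := hC b
    have h4 := mul_le_mul_of_nonneg_left hb hC0
    have h5 : 0 ≤ C * |a - b| ^ m := by positivity
    have h6 : 0 ≤ C * |a| ^ m := by positivity
    have h7 : 0 ≤ C * 2 ^ m := by positivity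
    rw [hC']
    nlinarith
  have hpow : ∀ R x : ℝ, 1 ≤ R → R ≤ x → R * x ^ m ≤ x ^ (2 * M) := by
    intro R x h1 h2
    have hx : 1 ≤ x := h1.trans h2
    calc R * x ^ m ≤ x * x ^ m := by gcongr
      _ = x ^ (m + 1) := by ring
      _ ≤ x ^ (2 * M) := pow_le_pow_right₀ hx hM
  have heven : ∀ x : ℝ, |x| ^ (2 * M) = x ^ (2 * M) := fun x => Even.pow_abs ⟨M, by ring⟩ x
  set R := max 1 (3 * C' / η) with hR
  have hR1 : 1 ≤ R := le_max_left _ _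
  have hRη : 3 * C' ≤ η * R := by
    have := le_max_right 1 (3 * C' / η)
    rw [← hR, div_le_iff₀ hη] at this
    linarith
  have huc := (isCompact_Icc (a := -(R + 1)) (b := R + 1)).uniformContinuousOn_of_continuous
    hf.continuousOn
  obtain ⟨δ0, hδ0, hδ⟩ := Metric.uniformContinuousOn_iff.1 huc η hη
  set δ := min δ0 1 with hδd
  have hδpos : 0 < δ := lt_min hδ0 one_pos
  have hδ1 : δ ≤ 1 := min_le_right _ _
  refine ⟨C' * (2 + R ^ m) / δ ^ (2 * M), by positivity, fun a b => ?_⟩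
  have hKnn : 0 ≤ C' * (2 + R ^ m) / δ ^ (2 * M) * (a - b) ^ (2 * M) := by
    rw [← heven (a - b)]; positivity
  have hann : 0 ≤ a ^ (2 * M) := by rw [← heven]; positivity
  by_cases hd : |a - b| < δ
  · by_cases ha : |a| ≤ R
    · have hb : |b| ≤ R + 1 := by
        have := abs_sub a (a - b)
        simp only [sub_sub_cancel] at this
        linarith
      have := hδ a (abs_le.1 (by linarith)) b (abs_le.1 hb)
        (by rw [Real.dist_eq]; exact hd.trans_le (min_le_left _ _))
      rw [Real.dist_eq] at this
      nlinarith
    · push Not at ha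
      have h1 := hgrow a b
      have h2 := hpow R |a| hR1 ha.le
      rw [heven] at h2
      have h3 : |a - b| ^ m ≤ 1 := pow_le_one₀ (abs_nonneg _) (hd.le.trans hδ1)
      have h4 : 1 ≤ |a| ^ m := one_le_pow₀ (hR1.trans ha.le)
      have h5 : C' * (1 + |a| ^ m + |a - b| ^ m) ≤ C' * (3 * |a| ^ m) := by
        gcongr; linarith
      have h6 : (3 * C') * |a| ^ m ≤ (η * R) * |a| ^ m := by gcongr
      have h7 := mul_le_mul_of_nonneg_left h2 hη.le
      nlinarith
  · push Not at hd
    have h1 := hgrow a b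
    have ha : C' * |a| ^ m ≤ η * a ^ (2 * M) + C' * R ^ m := by
      by_cases ha : |a| ≤ R
      · have : |a| ^ m ≤ R ^ m := pow_le_pow_left₀ (abs_nonneg a) ha m
        have := mul_le_mul_of_nonneg_left this hC'0
        have : 0 ≤ η * a ^ (2 * M) := by positivity
        linarith
      · push Not at ha
        have h2 := hpow R |a| hR1 ha.le
        rw [heven] at h2
        have h6 : (3 * C') * |a| ^ m ≤ (η * R) * |a| ^ m := by gcongr
        have h7 := mul_le_mul_of_nonneg_left h2 hη.le
        have h8 : 0 ≤ C' * R ^ m := by positivity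
        have h9 : 0 ≤ C' * |a| ^ m := by positivity
        nlinarith
    have hr : 1 ≤ |a - b| / δ := by rwa [le_div_iff₀ hδpos, one_mul]
    set r := |a - b| / δ with hrd
    have hrp : C' * (2 + R ^ m) / δ ^ (2 * M) * (a - b) ^ (2 * M) = C' * (2 + R ^ m) * r ^ (2 * M) := by
      rw [hrd, div_pow, heven]; ring
    have hdm : |a - b| ^ m ≤ r ^ (2 * M) := by
      calc |a - b| ^ m ≤ r ^ m := by
            gcongr
            rw [hrd, le_div_iff₀ hδpos]
            nlinarith [abs_nonneg (a - b)]
        _ ≤ r ^ (2 * M) := pow_le_pow_right₀ hr (by omega)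
    have h1r : 1 ≤ r ^ (2 * M) := one_le_pow₀ hr
    rw [hrp]
    have h2 := mul_le_mul_of_nonneg_left hdm hC'0
    have h3 : C' * (1 + R ^ m) * 1 ≤ C' * (1 + R ^ m) * r ^ (2 * M) := by gcongr
    nlinarith

lemma exists_partition {n : ℕ} (lam : (Fintype.card (Fin n)).Partition) :
    ∃ s : Equiv.Perm (Fin n), s.partition = lam := by
  have hsplit : lam.parts = lam.parts.filter (fun a => 2 ≤ a) +
      Multiset.replicate (lam.parts.count 1) 1 := by
    conv_lhs => rw [← Multiset.filter_add_not (fun a => 2 ≤ a) lam.parts]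
    congr 1
    rw [← Multiset.filter_eq']
    refine Multiset.filter_congr fun a ha => ?_
    have := lam.parts_pos ha
    omega
  have hsum := lam.parts_sum
  rw [hsplit, Multiset.sum_add, Multiset.sum_replicate, smul_eq_mul, mul_one] at hsum
  obtain ⟨s, hs⟩ := (Equiv.Perm.exists_with_cycleType_iff (α := Fin n)
    (m := lam.parts.filter (fun a => 2 ≤ a))).2
      ⟨by omega, fun a ha => (Multiset.mem_filter.1 ha).2⟩
  refine ⟨s, Nat.Partition.ext ?_⟩
  rw [Equiv.Perm.parts_partition, hs, ← Equiv.Perm.sum_cycleType, hs]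
  conv_rhs => rw [hsplit]
  congr 2
  omega

lemma fact_pos (n : ℕ) : (0 : ℝ) < Fintype.card (Equiv.Perm (Fin n)) := by
  rw [card_perm_real]; positivity

lemma En_mono {n : ℕ} {g h : Equiv.Perm (Fin n) → ℝ} (H : ∀ σ, g σ ≤ h σ) : En g ≤ En h := by
  unfold En
  exact div_le_div_of_nonneg_right (Finset.sum_le_sum fun σ _ => H σ) (fact_pos n).le

lemma En_add {n : ℕ} (g h : Equiv.Perm (Fin n) → ℝ) : En (fun σ => g σ + h σ) = En g + En h := by
  unfold En; rw [Finset.sum_add_distrib, add_div]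

lemma En_sub {n : ℕ} (g h : Equiv.Perm (Fin n) → ℝ) : En (fun σ => g σ - h σ) = En g - En h := by
  unfold En; rw [Finset.sum_sub_distrib, sub_div]

lemma En_const {n : ℕ} (c : ℝ) : En (fun _ : Equiv.Perm (Fin n) => c) = c := by
  unfold En
  rw [Finset.sum_const, Finset.card_univ, nsmul_eq_mul, mul_comm, mul_div_cancel_right₀ _ (fact_pos n).ne']

lemma En_mul {n : ℕ} (c : ℝ) (g : Equiv.Perm (Fin n) → ℝ) : En (fun σ => c * g σ) = c * En g := by
  unfold En; rw [← Finset.mul_sum, mul_div_assoc]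

lemma En_abs {n : ℕ} (g : Equiv.Perm (Fin n) → ℝ) : |En g| ≤ En (fun σ => |g σ|) := by
  unfold En
  rw [abs_div, abs_of_pos (fact_pos n)]
  exact div_le_div_of_nonneg_right (Finset.abs_sum_le_sum_abs _ _) (fact_pos n).le

lemma sum_conj {n : ℕ} (g : Equiv.Perm (Fin n) → ℝ) (w : Equiv.Perm (Fin n)) :
    ∑ σ, g (w * σ * w⁻¹) = ∑ σ, g σ :=
  Equiv.sum_comp (MulAut.conj w).toEquiv g

lemma En_conj {n : ℕ} (g : Equiv.Perm (Fin n) → ℝ) :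
    En (fun σ => En (fun w => g (w * σ * w⁻¹))) = En g := by
  have : En (fun σ => En (fun w => g (w * σ * w⁻¹))) = En (fun w => En (fun σ => g (w * σ * w⁻¹))) := by
    unfold En
    simp only [← Finset.sum_div]
    rw [Finset.sum_comm]
  rw [this]
  simp only [En, sum_conj]
  exact En_const _

lemma En_conj_shift {n : ℕ} (g : Equiv.Perm (Fin n) → ℝ) (s u : Equiv.Perm (Fin n)) :
    En (fun w => g (w * (u * s * u⁻¹) * w⁻¹)) = En (fun w => g (w * s * w⁻¹)) := by
  unfold En
  congr 1
  rw [← Equiv.sum_comp (Equiv.mulRight u) (fun w => g (w * s * w⁻¹))]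
  refine Finset.sum_congr rfl fun w _ => ?_
  simp [mul_assoc]

lemma EnCond_eq {n : ℕ} (lam : (Fintype.card (Fin n)).Partition) (s : Equiv.Perm (Fin n))
    (hs : s.partition = lam) (g : Equiv.Perm (Fin n) → ℝ) :
    EnCond lam g = En (fun w => g (w * s * w⁻¹)) := by
  unfold EnCond
  set T := Finset.univ.filter (fun σ : Equiv.Perm (Fin n) => σ.partition = lam) with hT
  have hTpos : (0 : ℝ) < T.card := by
    exact_mod_cast Finset.card_pos.2 ⟨s, by simp [hT, hs]⟩
  have h1 : ∀ σ ∈ T, En (fun w => g (w * σ * w⁻¹)) = En (fun w => g (w * s * w⁻¹)) := by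
    intro σ hσ
    have h2 : σ.partition = s.partition := by rw [hs]; exact (Finset.mem_filter.1 hσ).2
    obtain ⟨u, hu⟩ := isConj_iff.1 (Equiv.Perm.partition_eq_of_isConj.2 h2.symm)
    rw [← hu, En_conj_shift]
  have h2 : ∀ w : Equiv.Perm (Fin n), ∑ σ ∈ T, g (w * σ * w⁻¹) = ∑ σ ∈ T, g σ := by
    intro w
    rw [hT, Finset.sum_filter, Finset.sum_filter,
      ← sum_conj (fun σ => if σ.partition = lam then g σ else 0) w]
    refine Finset.sum_congr rfl fun σ _ => ?_
    have : (w * σ * w⁻¹).partition = σ.partition :=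
      (Equiv.Perm.partition_eq_of_isConj.1 (isConj_iff.2 ⟨w, rfl⟩)).symm
    rw [this]
  have h3 := Finset.sum_congr rfl h1
  rw [Finset.sum_const, nsmul_eq_mul] at h3
  rw [div_eq_iff hTpos.ne', mul_comm, ← h3]
  unfold En
  rw [← Finset.sum_div, Finset.sum_comm]
  simp only [h2]
  exact (En_const _).symm

lemma En_cyc_moment {n : ℕ} (M : ℕ) :
    En (fun σ : Equiv.Perm (Fin n) => (cyc σ : ℝ) ^ (2 * M)) ≤
      (2 * M).factorial / Real.log 2 ^ (2 * M) * (n + 1) := by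
  have hl : 0 < Real.log 2 := Real.log_pos (by norm_num)
  have hpt : ∀ c : ℕ, (c : ℝ) ^ (2 * M) ≤ (2 * M).factorial / Real.log 2 ^ (2 * M) * 2 ^ c := by
    intro c
    have h1 := Real.pow_div_factorial_le_exp (c * Real.log 2) (by positivity) (2 * M)
    rw [mul_comm (c : ℝ), Real.exp_mul, Real.exp_log (by norm_num), Real.rpow_natCast,
      div_le_iff₀ (by positivity), mul_pow] at h1
    rw [div_mul_eq_mul_div, le_div_iff₀ (by positivity)]
    linarith
  refine (En_mono (fun σ => hpt (cyc σ))).trans ?_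
  rw [En_mul]
  refine mul_le_mul_of_nonneg_left ?_ (by positivity)
  unfold En
  rw [card_perm_real, div_le_iff₀ (by positivity)]
  have := sum_two_pow_cyc n
  rw [Nat.factorial_succ] at this
  beta_reduce
  exact_mod_cast this

lemma tauBar_diff {n : ℕ} (hn : 2 ≤ n) (σ ρ : Equiv.Perm (Fin n)) (c d M : ℕ)
    (h : hammingDist (σ : Fin n → Fin n) ρ ≤ 2 * (c + d)) :
    (kendallTauBar σ - kendallTauBar ρ) ^ (2 * M) ≤
      4608 ^ M * ((c : ℝ) ^ (2 * M) + (d : ℝ) ^ (2 * M)) / n ^ M := by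
  have hpos := sdn_pos hn
  have hsq := sdn_sq hn
  have h2 : (0 : ℝ) < n := by exact_mod_cast (by omega : 0 < n)
  have h' : (hammingDist (σ : Fin n → Fin n) ρ : ℝ) ≤ 2 * (c + d) := by exact_mod_cast h
  have h1 : |kendallTauBar σ - kendallTauBar ρ| * sdn n ≤ 4 * n * (c + d) := by
    have e : kendallTauBar σ - kendallTauBar ρ = ((kendallTau σ : ℝ) - kendallTau ρ) / sdn n := by
      rw [tauBar_eq, tauBar_eq]; unfold ctau; ring
    rw [e, abs_div, abs_of_pos hpos, div_mul_cancel₀ _ hpos.ne']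
    refine (tau_diff_abs σ ρ).trans ?_
    have := mul_le_mul_of_nonneg_left h' (by positivity : (0:ℝ) ≤ 2 * n)
    linarith
  have h3 : (kendallTauBar σ - kendallTauBar ρ) ^ 2 ≤ 1152 * ((c : ℝ) + d) ^ 2 / n := by
    have h4 := pow_le_pow_left₀ (by positivity) h1 2
    rw [mul_pow, sq_abs] at h4
    have h5 := mul_le_mul_of_nonneg_left hsq (sq_nonneg (kendallTauBar σ - kendallTauBar ρ))
    have h6 := h5.trans h4
    rw [le_div_iff₀ h2]
    have h7 : (kendallTauBar σ - kendallTauBar ρ) ^ 2 * n * (n ^ 2 / 72) ≤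
      1152 * ((c : ℝ) + d) ^ 2 * (n ^ 2 / 72) := by nlinarith
    exact le_of_mul_le_mul_right h7 (by positivity)
  have h8 : ((c : ℝ) + d) ^ (2 * M) ≤ 4 ^ M * ((c : ℝ) ^ (2 * M) + (d : ℝ) ^ (2 * M)) := by
    have hc : (0 : ℝ) ≤ c := Nat.cast_nonneg c
    have hd : (0 : ℝ) ≤ d := Nat.cast_nonneg d
    have e : (4 : ℝ) ^ M = 2 ^ (2 * M) := by rw [pow_mul]; norm_num
    rw [e]
    rcases le_total (c : ℝ) d with hcd | hcd
    · calc ((c : ℝ) + d) ^ (2 * M) ≤ (2 * d) ^ (2 * M) := by gcongr; linarith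
        _ = 2 ^ (2 * M) * (d : ℝ) ^ (2 * M) := mul_pow _ _ _
        _ ≤ _ := by gcongr; linarith [pow_nonneg hc (2 * M)]
    · calc ((c : ℝ) + d) ^ (2 * M) ≤ (2 * c) ^ (2 * M) := by gcongr; linarith
        _ = 2 ^ (2 * M) * (c : ℝ) ^ (2 * M) := mul_pow _ _ _
        _ ≤ _ := by gcongr; linarith [pow_nonneg hd (2 * M)]
  calc (kendallTauBar σ - kendallTauBar ρ) ^ (2 * M)
      = ((kendallTauBar σ - kendallTauBar ρ) ^ 2) ^ M := pow_mul _ _ _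
    _ ≤ (1152 * ((c : ℝ) + d) ^ 2 / n) ^ M := by gcongr
    _ = 1152 ^ M * ((c : ℝ) + d) ^ (2 * M) / n ^ M := by rw [div_pow, mul_pow, ← pow_mul]
    _ ≤ 1152 ^ M * (4 ^ M * ((c : ℝ) ^ (2 * M) + (d : ℝ) ^ (2 * M))) / n ^ M := by gcongr
    _ = _ := by rw [← mul_assoc, ← mul_pow]; norm_num

lemma main_bound {n : ℕ} (hn : 2 ≤ n) (s : Equiv.Perm (Fin n)) (f : ℝ → ℝ) (η K : ℝ) (hη : 0 ≤ η)
    (hK : 0 ≤ K) (M : ℕ)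
    (hf : ∀ a b : ℝ, |f a - f b| ≤ η * (1 + a ^ (2 * M)) + K * (a - b) ^ (2 * M)) :
    |En (fun w => f (kendallTauBar (w * s * w⁻¹))) - En (n := n) (fun σ => f (kendallTauBar σ))| ≤
      η * (1 + (2 * M).factorial * (2 * Real.exp 3)) +
      K * (4608 ^ M * ((2 * M).factorial / Real.log 2 ^ (2 * M) * (n + 1) + (cyc s : ℝ) ^ (2 * M))
        / n ^ M) := by
  have h1 : ∀ σ : Equiv.Perm (Fin n),
      |En (fun w => f (kendallTauBar (w * σ * w⁻¹))) - En (fun w => f (kendallTauBar (w * s * w⁻¹)))| ≤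
      En (fun w => η * (1 + kendallTauBar (w * σ * w⁻¹) ^ (2 * M))) +
        K * (4608 ^ M * ((cyc σ : ℝ) ^ (2 * M) + (cyc s : ℝ) ^ (2 * M)) / n ^ M) := by
    intro σ
    obtain ⟨u, hu⟩ := exists_conj_close hn σ s
    rw [← En_conj_shift (fun σ => f (kendallTauBar σ)) s u, ← En_sub]
    refine (En_abs _).trans ?_
    rw [← En_const (n := n) (K * (4608 ^ M * ((cyc σ : ℝ) ^ (2 * M) + (cyc s : ℝ) ^ (2 * M)) / n ^ M)),
      ← En_add]
    refine En_mono fun w => (hf _ _).trans ?_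
    have := tauBar_diff hn (w * σ * w⁻¹) (w * (u * s * u⁻¹) * w⁻¹) (cyc σ) (cyc s) M
      (by rw [hamming_conj]; exact hu)
    have := mul_le_mul_of_nonneg_left this hK
    linarith
  rw [abs_sub_comm, ← En_conj (fun σ => f (kendallTauBar σ)),
    ← En_const (n := n) (En (fun w => f (kendallTauBar (w * s * w⁻¹)))), ← En_sub]
  refine (En_abs _).trans ((En_mono h1).trans ?_)
  rw [En_add, En_conj (fun σ => η * (1 + kendallTauBar σ ^ (2 * M))), En_mul, En_add, En_const, En_mul]
  have e : En (fun σ : Equiv.Perm (Fin n) =>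
      4608 ^ M * ((cyc σ : ℝ) ^ (2 * M) + (cyc s : ℝ) ^ (2 * M)) / (n : ℝ) ^ M) =
      4608 ^ M * (En (fun σ : Equiv.Perm (Fin n) => (cyc σ : ℝ) ^ (2 * M)) + (cyc s : ℝ) ^ (2 * M))
        / n ^ M := by
    have : (fun σ : Equiv.Perm (Fin n) =>
      4608 ^ M * ((cyc σ : ℝ) ^ (2 * M) + (cyc s : ℝ) ^ (2 * M)) / (n : ℝ) ^ M) =
      fun σ => (4608 ^ M / (n : ℝ) ^ M) * ((cyc σ : ℝ) ^ (2 * M) + (cyc s : ℝ) ^ (2 * M)) := by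
      funext σ; ring
    rw [this, En_mul, En_add, En_const]; ring
  rw [e]
  have m1 := En_moment hn M
  have m2 := En_cyc_moment (n := n) M
  gcongr

/-- For `0 < ε < 1/6` and partitions `λ^n ⊢ n` with at most `n^ε` parts, the
conditional expectation of `f(τ̄)` given cycle type `λ^n` converges to the
unconditional expectation, for every continuous `f` of polynomial growth. -/
theorem condExp_kendallTauBar_given_cycleType_tendsto
    (ε : ℝ) (hε0 : 0 < ε) (hε : ε < 1 / 6)
    (lam : ∀ n : ℕ, (Fintype.card (Fin n)).Partition)
    (hlam : ∀ n : ℕ, ((lam n).parts.card : ℝ) ≤ (n : ℝ) ^ ε)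
    (f : ℝ → ℝ) (hf : Continuous f)
    (hpoly : ∃ C : ℝ, ∃ m : ℕ, ∀ x : ℝ, |f x| ≤ C * (1 + |x| ^ m)) :
    Tendsto (fun n : ℕ =>
        EnCond (lam n) (fun σ => f (kendallTauBar σ)) -
          En (n := n) (fun σ => f (kendallTauBar σ)))
      atTop (nhds 0) := by
  obtain ⟨C, m, hC⟩ := hpoly
  set M := m + 2 with hM
  set K2 : ℝ := (2 * M).factorial / Real.log 2 ^ (2 * M) with hK2
  have hl : 0 < Real.log 2 := Real.log_pos (by norm_num)
  have hK2pos : 0 ≤ K2 := by positivity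
  set B : ℝ := 1 + (2 * M).factorial * (2 * Real.exp 3) with hB
  have hBpos : 0 < B := by positivity
  have hbound : ∀ η : ℝ, 0 < η → ∃ K : ℝ, 0 ≤ K ∧ ∀ n : ℕ, 2 ≤ n →
      |EnCond (lam n) (fun σ => f (kendallTauBar σ)) - En (n := n) (fun σ => f (kendallTauBar σ))| ≤
        η * B + K * (1 / (n : ℝ)) := by
    intro η hη
    obtain ⟨K, hK, hptw⟩ := ptwise f hf C m M (by omega) hC η hη
    refine ⟨K * (4608 ^ M * (2 * K2 + 1)), by positivity, fun n hn => ?_⟩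
    obtain ⟨s, hs⟩ := exists_partition (lam n)
    have h := main_bound hn s f η K hη.le hK M hptw
    rw [EnCond_eq (lam n) s hs]
    refine h.trans ?_
    have hn1 : (1 : ℝ) ≤ n := by exact_mod_cast (by omega : 1 ≤ n)
    have hn0 : (0 : ℝ) < n := by linarith
    have hc : (cyc s : ℝ) ≤ (n : ℝ) ^ ε := by
      refine le_trans ?_ (hlam n)
      rw [← hs]
      exact_mod_cast cyc_le_parts s
    have hcM : (cyc s : ℝ) ^ (2 * M) ≤ (n : ℝ) ^ (M - 1) := by
      calc (cyc s : ℝ) ^ (2 * M) ≤ ((n : ℝ) ^ ε) ^ (2 * M) := by gcongr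
        _ = (n : ℝ) ^ (ε * (2 * M : ℕ)) := by rw [Real.rpow_mul hn0.le, Real.rpow_natCast]
        _ ≤ (n : ℝ) ^ ((M - 1 : ℕ) : ℝ) := by
            apply Real.rpow_le_rpow_of_exponent_le hn1
            have h2 : (2 : ℝ) ≤ M := by exact_mod_cast (by omega : 2 ≤ M)
            rw [Nat.cast_sub (by omega)]
            push_cast
            nlinarith
        _ = _ := Real.rpow_natCast _ _
    have hnM : (n : ℝ) + 1 ≤ 2 * (n : ℝ) ^ (M - 1) := by
      have : (n : ℝ) ^ 1 ≤ (n : ℝ) ^ (M - 1) := pow_le_pow_right₀ hn1 (by omega)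
      rw [pow_one] at this
      linarith
    have hfin : K2 * ((n : ℝ) + 1) + (cyc s : ℝ) ^ (2 * M) ≤ (2 * K2 + 1) * (n : ℝ) ^ (M - 1) := by
      have := mul_le_mul_of_nonneg_left hnM hK2pos
      linarith
    have hpw : (n : ℝ) ^ M = n ^ (M - 1) * n := by
      rw [← pow_succ]; congr 1
    have hp : (0 : ℝ) < (n : ℝ) ^ (M - 1) := by positivity
    have : 4608 ^ M * (K2 * ((n : ℝ) + 1) + (cyc s : ℝ) ^ (2 * M)) / n ^ M ≤
        4608 ^ M * (2 * K2 + 1) * (1 / (n : ℝ)) := by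
      rw [div_le_iff₀ (by positivity), hpw]
      have := mul_le_mul_of_nonneg_left hfin (by positivity : (0 : ℝ) ≤ 4608 ^ M)
      refine this.trans (le_of_eq ?_)
      field_simp
    have := mul_le_mul_of_nonneg_left this hK
    linarith
  rw [Metric.tendsto_atTop]
  intro δ hδ
  obtain ⟨K, hK, hKb⟩ := hbound (δ / (2 * B)) (by positivity)
  obtain ⟨N, hN⟩ := exists_nat_gt (2 * K / δ)
  refine ⟨max 2 (N + 1), fun n hn => ?_⟩
  have hn2 : 2 ≤ n := (le_max_left _ _).trans hn
  have hnN : (N : ℝ) < n := by exact_mod_cast (le_max_right _ _).trans hn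
  have hn0 : (0 : ℝ) < n := by exact_mod_cast (by omega : 0 < n)
  rw [Real.dist_eq, sub_zero]
  refine (hKb n hn2).trans_lt ?_
  have h1 : δ / (2 * B) * B = δ / 2 := by field_simp
  have h2 : K * (1 / (n : ℝ)) < δ / 2 := by
    rw [mul_one_div, div_lt_iff₀ hn0]
    have := hN.trans hnN
    rw [div_lt_iff₀ hδ] at this
    linarith
  linarith
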